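/- arXiv:2105.00395 — 2 statements merged into one kernel-verified Lean document; each statement's English description precedes it below -/
import Mathlib

section
/- Let T ∈ ℕ with T ≥ 1, r ∈ (0,1], δ ∈ (0,1), σ_n > 0, Q > 0, and let ε ∈ ℝ satisfy ε ≥ T ln(1 + 4r²) + ln(1/δ). Define β = (σ_n²/2) · ln((exp((ε − ln(1/δ))/T) − 1)/(2r²)) / Q and x = 2βQ/σ_n². Then β ≥ 0, x ≥ ln 2, and T · ln(1 + r² · min{4(exp(x) − 1), 2 exp(x)}) + ln(1/δ) = ε. -/
/-!
The two branches of the minimum in the privacy bound cross at `x = log 2`, where the bound equals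
`T log (1 + 4 r²) + log (1/δ)`; the lower bound on `ε` therefore keeps the calibration in the regime
`log 2 ≤ x`. There the minimum is `2 exp x`, and solving `T log (1 + 2 r² exp x) + log (1/δ) = ε`
for `x` gives the logarithm in the formula for `β`.
-/

open Real

/-- The loose differential privacy bound after `T` time slots with subsampling ratio `r`, as a
function of the signal-to-noise exponent `x`. The additive term `log (1 / δ)` is the parameter `L`,
and `T` is allowed to be real. -/
noncomputable def looseDPBound (T r L x : ℝ) : ℝ :=
  T * log (1 + r ^ 2 * min (4 * (exp x - 1)) (2 * exp x)) + L

/-- The exponent solving `T * log (1 + 2 * r ^ 2 * exp x) + L = ε` for `x`; the power scaling factor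
`β` is chosen so as to attain it. Where no solution exists the value is junk. -/
noncomputable def calibratedExponent (T r L ε : ℝ) : ℝ :=
  log ((exp ((ε - L) / T) - 1) / (2 * r ^ 2))

theorem min_four_mul_exp_sub_one_eq_two_mul_exp_iff {x : ℝ} :
    min (4 * (exp x - 1)) (2 * exp x) = 2 * exp x ↔ log 2 ≤ x := by
  rw [min_eq_right_iff, log_le_iff_le_exp two_pos]
  constructor <;> intro h <;> linarith

theorem looseDPBound_of_log_two_le {x : ℝ} (T r L : ℝ) (hx : log 2 ≤ x) :
    looseDPBound T r L x = T * log (1 + 2 * r ^ 2 * exp x) + L := by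
  rw [looseDPBound, min_four_mul_exp_sub_one_eq_two_mul_exp_iff.2 hx, mul_left_comm, mul_assoc]

theorem le_exp_div_of_mul_log_add_le {T a L ε : ℝ} (hT : 0 < T) (ha : 0 < a)
    (h : T * log a + L ≤ ε) : a ≤ exp ((ε - L) / T) := by
  rw [← log_le_iff_le_exp ha, le_div_iff₀' hT]
  exact le_sub_iff_add_le.2 h

section Calibration

variable {T r L ε : ℝ}

theorem exp_calibratedExponent (hT : 0 < T) (hr : r ≠ 0) (hε : L < ε) :
    exp (calibratedExponent T r L ε) = (exp ((ε - L) / T) - 1) / (2 * r ^ 2) := by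
  have hexp : 1 < exp ((ε - L) / T) := one_lt_exp_iff.2 (div_pos (sub_pos.2 hε) hT)
  exact exp_log (div_pos (sub_pos.2 hexp) (by positivity))

theorem mul_log_one_add_exp_calibratedExponent (hT : 0 < T) (hr : r ≠ 0) (hε : L < ε) :
    T * log (1 + 2 * r ^ 2 * exp (calibratedExponent T r L ε)) + L = ε := by
  rw [exp_calibratedExponent hT hr hε, mul_div_cancel₀ _ (by positivity), add_sub_cancel, log_exp,
    mul_div_cancel₀ _ hT.ne', sub_add_cancel]

theorem log_two_le_calibratedExponent (hT : 0 < T) (hr : r ≠ 0)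
    (hε : T * log (1 + 4 * r ^ 2) + L ≤ ε) : log 2 ≤ calibratedExponent T r L ε := by
  have hexp : 1 + 4 * r ^ 2 ≤ exp ((ε - L) / T) :=
    le_exp_div_of_mul_log_add_le hT (by positivity) hε
  refine log_le_log two_pos ((le_div_iff₀ (by positivity)).2 ?_)
  linarith

theorem looseDPBound_calibratedExponent (hT : 0 < T) (hr : r ≠ 0)
    (hε : T * log (1 + 4 * r ^ 2) + L ≤ ε) :
    looseDPBound T r L (calibratedExponent T r L ε) = ε := by
  have hlog : 0 < log (1 + 4 * r ^ 2) := log_pos (lt_add_of_pos_right 1 (by positivity))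
  have hLε : L < ε := (lt_add_of_pos_left L (mul_pos hT hlog)).trans_le hε
  rw [looseDPBound_of_log_two_le T r L (log_two_le_calibratedExponent hT hr hε),
    mul_log_one_add_exp_calibratedExponent hT hr hLε]

theorem stmt8_general {σ Q β x : ℝ} (hT : 0 < T) (hr : r ≠ 0) (hσ : σ ≠ 0) (hQ : 0 < Q)
    (hε : T * log (1 + 4 * r ^ 2) + L ≤ ε)
    (hβ : β = σ ^ 2 / 2 * calibratedExponent T r L ε / Q) (hx : x = 2 * β * Q / σ ^ 2) :
    0 ≤ β ∧ log 2 ≤ x ∧ looseDPBound T r L x = ε := by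
  have hlog : log 2 ≤ calibratedExponent T r L ε := log_two_le_calibratedExponent hT hr hε
  have hxcal : x = calibratedExponent T r L ε := by
    rw [hx, hβ]
    field_simp
  refine ⟨?_, hxcal ▸ hlog, hxcal ▸ looseDPBound_calibratedExponent hT hr hε⟩
  have hcal : 0 ≤ calibratedExponent T r L ε := (log_nonneg one_le_two).trans hlog
  rw [hβ]
  positivity

end Calibration

theorem stmt8 (T : ℕ) (hT : 1 ≤ T) (r δ σn Q : ℝ)
    (hr : r ∈ Set.Ioc (0 : ℝ) 1) (hδ : δ ∈ Set.Ioo (0 : ℝ) 1)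
    (hσ : 0 < σn) (hQ : 0 < Q) (ε : ℝ)
    (hε : T * Real.log (1 + 4 * r ^ 2) + Real.log (1 / δ) ≤ ε)
    (β x : ℝ)
    (hβ : β = (σn ^ 2 / 2) *
      Real.log ((Real.exp ((ε - Real.log (1 / δ)) / T) - 1) / (2 * r ^ 2)) / Q)
    (hx : x = 2 * β * Q / σn ^ 2) :
    0 ≤ β ∧ Real.log 2 ≤ x ∧
      T * Real.log (1 + r ^ 2 * min (4 * (Real.exp x - 1)) (2 * Real.exp x)) +
        Real.log (1 / δ) = ε :=
  stmt8_general (Nat.cast_pos.2 hT) hr.1.ne' hσ.ne' hQ hε hβ hx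
end

section
/- Let T ∈ ℕ with T ≥ 1, r ∈ (0,1], δ ∈ (0,1), σ_n > 0, Q > 0, and define the piecewise power scaling factor β(ε) = (σ_n²/2)·ln((exp((ε − ln(1/δ))/T) − 1)/(2r²))/Q if ε ≥ T ln(1+4r²) + ln(1/δ), and β(ε) = (σ_n²/2)·ln((exp((ε − ln(1/δ))/T) − (1 − 4r²))/(4r²))/Q otherwise. Then β is monotone: for all ε₁, ε₂ with ln(1/δ) < ε₁ ≤ ε₂, β(ε₁) ≤ β(ε₂). -/
/-!
In terms of `x = exp ((ε - log (1 / δ)) / T)`, which increases with `ε`, the threshold on `ε` reads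
`1 + 4 * r ^ 2 ≤ x`. The arguments of the two logarithms are increasing affine functions of `x`
which both equal `2` at the threshold, and the first has the larger slope. The piecewise argument
is therefore the maximum of the two, and a maximum of strictly increasing functions is strictly
increasing.
-/

section ScalingArg

variable {K : Type*} [Field K] [LinearOrder K]

/-- The argument of the logarithm in the power scaling factor, for `a = r ^ 2` and
`x = exp ((ε - log (1 / δ)) / T)`. It is encoded as a maximum rather than by cases, so that its
monotonicity in `x` is that of the two pieces. -/
def scalingArg (a x : K) : K :=
  max ((x - 1) / (2 * a)) ((x - (1 - 4 * a)) / (4 * a))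

variable [IsStrictOrderedRing K] {a x : K}

theorem scalingArg_eq_ite (ha : 0 < a) (x : K) :
    scalingArg a x =
      if 1 + 4 * a ≤ x then (x - 1) / (2 * a) else (x - (1 - 4 * a)) / (4 * a) := by
  have piece_le_iff : (x - (1 - 4 * a)) / (4 * a) ≤ (x - 1) / (2 * a) ↔ 1 + 4 * a ≤ x := by
    rw [← mul_div_mul_left (x - 1) (2 * a) two_ne_zero, ← mul_assoc,
      show (2 : K) * 2 = 4 by norm_num, div_le_div_iff_of_pos_right (by positivity)]
    constructor <;> intro h <;> linarith
  simp only [scalingArg, max_def', piece_le_iff]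

theorem scalingArg_pos (ha : 0 < a) (hx : 1 - 4 * a < x) : 0 < scalingArg a x :=
  lt_max_of_lt_right (div_pos (sub_pos.2 hx) (by positivity))

theorem strictMono_scalingArg (ha : 0 < a) : StrictMono (scalingArg a) := by
  intro x y hxy
  apply max_lt_max <;> gcongr

end ScalingArg

theorem strictMonoOn_log_scalingArg {a : ℝ} (ha : 0 < a) :
    StrictMonoOn (fun x ↦ Real.log (scalingArg a x)) (Set.Ioi (1 - 4 * a)) :=
  fun _ hx _ _ hxy ↦ Real.log_lt_log (scalingArg_pos ha hx) (strictMono_scalingArg ha hxy)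

section ExpSubDiv

variable {T : ℝ}

theorem strictMono_exp_sub_div (hT : 0 < T) (c : ℝ) :
    StrictMono fun ε ↦ Real.exp ((ε - c) / T) := by
  intro ε₁ ε₂ h
  dsimp only
  gcongr

theorem one_lt_exp_sub_div (hT : 0 < T) {c ε : ℝ} (h : c < ε) : 1 < Real.exp ((ε - c) / T) :=
  Real.one_lt_exp_iff.2 (div_pos (sub_pos.2 h) hT)

theorem mul_log_add_le_iff_le_exp_sub_div (hT : 0 < T) {x : ℝ} (hx : 0 < x) (c ε : ℝ) :
    T * Real.log x + c ≤ ε ↔ x ≤ Real.exp ((ε - c) / T) := by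
  rw [← Real.log_le_iff_le_exp hx, le_div_iff₀' hT, le_sub_iff_add_le]

end ExpSubDiv

theorem stmt12_general {T r c σn Q : ℝ} (hT : 0 < T) (hr : r ≠ 0) (hσ : σn ≠ 0) (hQ : 0 < Q)
    {β : ℝ → ℝ}
    (hβ : ∀ ε : ℝ, β ε =
      if T * Real.log (1 + 4 * r ^ 2) + c ≤ ε then
        (σn ^ 2 / 2) * Real.log ((Real.exp ((ε - c) / T) - 1) / (2 * r ^ 2)) / Q
      else
        (σn ^ 2 / 2) *
          Real.log ((Real.exp ((ε - c) / T) - (1 - 4 * r ^ 2)) / (4 * r ^ 2)) / Q) :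
    StrictMonoOn β {ε | 1 - 4 * r ^ 2 < Real.exp ((ε - c) / T)} := by
  have hr2 : 0 < r ^ 2 := by positivity
  have β_eq (ε : ℝ) :
      β ε = σn ^ 2 / 2 * Real.log (scalingArg (r ^ 2) (Real.exp ((ε - c) / T))) / Q := by
    rw [hβ, scalingArg_eq_ite hr2]
    simp only [mul_log_add_le_iff_le_exp_sub_div hT (show 0 < 1 + 4 * r ^ 2 by positivity)]
    split_ifs <;> rfl
  intro ε₁ h₁ ε₂ h₂ h₁₂
  have log_lt := strictMonoOn_log_scalingArg hr2 h₁ h₂ (strictMono_exp_sub_div hT c h₁₂)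
  rw [β_eq, β_eq]
  gcongr

theorem stmt12 (T : ℕ) (hT : 1 ≤ T) (r δ σn Q : ℝ)
    (hr : r ∈ Set.Ioc (0 : ℝ) 1) (hδ : δ ∈ Set.Ioo (0 : ℝ) 1)
    (hσ : 0 < σn) (hQ : 0 < Q)
    (β : ℝ → ℝ)
    (hβ : ∀ ε : ℝ, β ε =
      if T * Real.log (1 + 4 * r ^ 2) + Real.log (1 / δ) ≤ ε then
        (σn ^ 2 / 2) *
          Real.log ((Real.exp ((ε - Real.log (1 / δ)) / T) - 1) / (2 * r ^ 2)) / Q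
      else
        (σn ^ 2 / 2) *
          Real.log ((Real.exp ((ε - Real.log (1 / δ)) / T) - (1 - 4 * r ^ 2)) / (4 * r ^ 2)) / Q) :
    ∀ ε₁ ε₂ : ℝ, Real.log (1 / δ) < ε₁ → ε₁ ≤ ε₂ → β ε₁ ≤ β ε₂ := by
  have hT' : (0 : ℝ) < T := Nat.cast_pos.2 hT
  have β_strictMonoOn : StrictMonoOn β (Set.Ioi (Real.log (1 / δ))) :=
    (stmt12_general hT' hr.1.ne' hσ.ne' hQ hβ).mono fun _ hε ↦
      (sub_le_self 1 (by positivity)).trans_lt (one_lt_exp_sub_div hT' hε)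
  exact fun _ _ h₁ h₁₂ ↦ β_strictMonoOn.monotoneOn h₁ (h₁.trans_le h₁₂) h₁₂
end
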